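/- For every ternary relation φ : ℕ → ℕ → ℕ → Prop and every natural number x, if for every w there exists y < x such that φ y z₀ z₁ holds for all z₀ < w and all z₁ < w, then there exists y < x such that φ y z₀ z₁ holds for all z₀ and all z₁. -/

import Mathlib

theorem stmt_1 (φ : ℕ → ℕ → ℕ → Prop) (x : ℕ)
    (h : ∀ w, ∃ y < x, ∀ z₀ < w, ∀ z₁ < w, φ y z₀ z₁) :
    ∃ y < x, ∀ z₀ z₁, φ y z₀ z₁ := by
  by_contra hc
  have hc' : ∀ y, ∃ a b, y < x → ¬ φ y a b := by
    intro y
    by_cases hy : y < x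
    · by_contra hn
      apply hc
      refine ⟨y, hy, fun a b => ?_⟩
      by_contra hab
      exact hn ⟨a, b, fun _ => hab⟩
    · exact ⟨0, 0, fun h' => absurd h' hy⟩
  choose a b hab using hc'
  obtain ⟨y, hy, hφ⟩ := h ((Finset.range x).sup (fun y => a y + b y) + 1)
  have hle : a y + b y ≤ (Finset.range x).sup (fun y => a y + b y) :=
    Finset.le_sup (f := fun y => a y + b y) (Finset.mem_range.2 hy)
  exact hab y hy (hφ _ (by omega) _ (by omega))
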